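/- Let s ∈ (0,1), u ∈ C_c^∞(ℝⁿ), and let U be its Caffarelli–Silvestre extension. If ∫₀^∞∫_{ℝⁿ} z^{1−2s} |∇_x² U(x,z)|² dx dz < ∞, then ∫₀^∞∫_{ℝⁿ} z^{1−2s} | Δ_x( |∇̃U|² )(x,z) | dx dz < ∞, where Δ_x is the Laplacian in the x-variables, |∇̃U|² = |∇_x U|² + |∂_z U|², and |∇_x² U|² is the squared Frobenius norm of the Hessian in the x-variables. -/

import Mathlib

open MeasureTheory Filter Set
open scoped Topology ENNReal NNReal

noncomputable section

/-- `ℝⁿ` with the Euclidean norm. -/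
abbrev En (n : ℕ) := EuclideanSpace ℝ (Fin n)

/-- The normalizing constant `p(n,s) = Γ(n/2+s)/(π^{n/2} Γ(s))` of the Poisson kernel. -/
def pns (n : ℕ) (s : ℝ) : ℝ :=
  Real.Gamma ((n : ℝ) / 2 + s) / (Real.pi ^ ((n : ℝ) / 2) * Real.Gamma s)

/-- The fractional Poisson kernel `P_z^{(s)}(x) = p(n,s) z^{2s} (|x|² + z²)^{-(n+2s)/2}`. -/
def Pker (n : ℕ) (s z : ℝ) (x : En n) : ℝ :=
  pns n s * z ^ (2 * s) * (‖x‖ ^ 2 + z ^ 2) ^ (-((n : ℝ) + 2 * s) / 2)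

/-- Convolution with the fractional Poisson kernel in the first variable, at fixed `z`. -/
def Pconv (n : ℕ) (s z : ℝ) (f : En n → ℝ) (x : En n) : ℝ :=
  ∫ y, Pker n s z (x - y) * f y

/-- The Caffarelli–Silvestre extension `U(x,z) = (P_z^{(s)} ∗ u)(x)`. -/
def CSext (n : ℕ) (s : ℝ) (u : En n → ℝ) (x : En n) (z : ℝ) : ℝ :=
  Pconv n s z u x

/-- The constant `C(n,s) = 4^s Γ(n/2+s) / (π^{n/2} |Γ(-s)|)`. -/
def Cns (n : ℕ) (s : ℝ) : ℝ :=
  4 ^ s * Real.Gamma ((n : ℝ) / 2 + s) / (Real.pi ^ ((n : ℝ) / 2) * |Real.Gamma (-s)|)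

/-- The fractional Laplacian `(-Δ)^s w(x)` as a principal-value singular integral. -/
def fracLap (n : ℕ) (s : ℝ) (w : En n → ℝ) (x : En n) : ℝ :=
  Cns n s * limUnder (𝓝[>] (0 : ℝ))
    (fun ε : ℝ => ∫ y in {y : En n | ε < ‖x - y‖}, (w x - w y) / ‖x - y‖ ^ ((n : ℝ) + 2 * s))

/-- `Λ^s w := -(-Δ)^s w`. -/
def Lam (n : ℕ) (s : ℝ) (w : En n → ℝ) (x : En n) : ℝ := - fracLap n s w x

/-- The first-order carré du champ `Γ₁(u,v) = ½(Λ^s(uv) - u Λ^s v - v Λ^s u)`. -/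
def Gamma1 (n : ℕ) (s : ℝ) (u v : En n → ℝ) (x : En n) : ℝ :=
  (Lam n s (fun y => u y * v y) x - u x * Lam n s v x - v x * Lam n s u x) / 2

/-- The constant `β_s = 2^{2s-1} Γ(s)/Γ(1-s)`. -/
def betaS (s : ℝ) : ℝ := 2 ^ (2 * s - 1) * Real.Gamma s / Real.Gamma (1 - s)

/-- Partial derivative in the `i`-th coordinate direction. -/
def pd {n : ℕ} (i : Fin n) (f : En n → ℝ) (x : En n) : ℝ :=
  fderiv ℝ f x (EuclideanSpace.single i 1)

/-- The Laplacian in the `x`-variables. -/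
def lapX {n : ℕ} (f : En n → ℝ) (x : En n) : ℝ := ∑ i, pd i (pd i f) x

/-- The degenerate operator `L_s W = div_{x,z}(z^{1-2s} ∇̃W)`, written out as
`z^{1-2s} Δ_x W + ∂_z(z^{1-2s} ∂_z W)`. -/
def LsOp {n : ℕ} (s : ℝ) (W : En n → ℝ → ℝ) (x : En n) (z : ℝ) : ℝ :=
  z ^ (1 - 2 * s) * lapX (fun y => W y z) x
    + deriv (fun t => t ^ (1 - 2 * s) * deriv (W x) t) z


/-- Convolution with a general kernel. -/
def cv {n : ℕ} (k f : En n → ℝ) (x : En n) : ℝ := ∫ y, k (x - y) * f y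

lemma pd_smooth {n : ℕ} (i : Fin n) {f : En n → ℝ} (hf : ContDiff ℝ (⊤ : ℕ∞) f) :
    ContDiff ℝ (⊤ : ℕ∞) (pd i f) := by
  unfold pd
  have h : ContDiff ℝ (⊤ : ℕ∞) (fderiv ℝ f) := hf.fderiv_right (by simp)
  exact h.clm_apply contDiff_const

lemma pd_compact {n : ℕ} (i : Fin n) {f : En n → ℝ} (hf : HasCompactSupport f) :
    HasCompactSupport (pd i f) := hf.fderiv_apply ℝ _

lemma cv_eq_conv {n : ℕ} (k f : En n → ℝ) :
    cv k f = convolution k f (ContinuousLinearMap.mul ℝ ℝ) volume := by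
  ext x
  rw [convolution_eq_swap]
  rfl

lemma cv_smooth {n : ℕ} {k f : En n → ℝ} (hk : Continuous k)
    (hf : ContDiff ℝ (⊤ : ℕ∞) f) (hc : HasCompactSupport f) :
    ContDiff ℝ (⊤ : ℕ∞) (cv k f) := by
  rw [cv_eq_conv]
  exact hc.contDiff_convolution_right _ hk.locallyIntegrable hf

lemma pd_cv {n : ℕ} {k f : En n → ℝ} (hk : Continuous k)
    (hf : ContDiff ℝ (⊤ : ℕ∞) f) (hc : HasCompactSupport f) (i : Fin n) :
    pd i (cv k f) = cv k (pd i f) := by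
  have h1 : ContDiff ℝ 1 f := hf.of_le (by exact_mod_cast le_top)
  ext x
  rw [cv_eq_conv, cv_eq_conv]
  unfold pd
  rw [(hc.hasFDerivAt_convolution_right (ContinuousLinearMap.mul ℝ ℝ)
    (hk.locallyIntegrable (μ := volume)) h1 x).fderiv,
    convolution_precompR_apply _ hk.locallyIntegrable (hc.fderiv ℝ) (h1.continuous_fderiv (by simp))]

lemma pd_sq {n : ℕ} (i : Fin n) {f : En n → ℝ} (hf : ContDiff ℝ (⊤ : ℕ∞) f) (x : En n) :
    pd i (fun y => f y ^ 2) x = 2 * (f x * pd i f x) := by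
  have hd : DifferentiableAt ℝ f x := (hf.differentiable (by simp)) x
  unfold pd
  rw [fderiv_fun_pow 2 hd]
  simp [mul_assoc]

lemma pd_pd_sq {n : ℕ} (i : Fin n) {f : En n → ℝ} (hf : ContDiff ℝ (⊤ : ℕ∞) f) (x : En n) :
    pd i (pd i (fun y => f y ^ 2)) x
      = 2 * (pd i f x * pd i f x) + 2 * (f x * pd i (pd i f) x) := by
  have h : pd i (fun y => f y ^ 2) = fun y => 2 * (f y * pd i f y) := by
    ext y; exact pd_sq i hf y
  have hd : DifferentiableAt ℝ f x := (hf.differentiable (by simp)) x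
  have hd' : DifferentiableAt ℝ (pd i f) x := ((pd_smooth i hf).differentiable (by simp)) x
  rw [h]
  generalize hg : pd i f = g at *
  have hg' : fderiv ℝ f x (EuclideanSpace.single i 1) = g x := by rw [← hg]; rfl
  unfold pd
  rw [fderiv_const_mul (hd.fun_mul hd'), fderiv_fun_mul hd hd']
  simp [hg']
  ring

lemma pd_add {n : ℕ} (i : Fin n) {f g : En n → ℝ} (hf : ContDiff ℝ (⊤ : ℕ∞) f)
    (hg : ContDiff ℝ (⊤ : ℕ∞) g) :
    pd i (fun y => f y + g y) = fun y => pd i f y + pd i g y := by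
  ext x
  unfold pd
  rw [fderiv_fun_add ((hf.differentiable (by simp)) x) ((hg.differentiable (by simp)) x)]
  rfl

lemma pd_sum {n : ℕ} (i : Fin n) {f : Fin n → En n → ℝ}
    (hf : ∀ j, ContDiff ℝ (⊤ : ℕ∞) (f j)) :
    pd i (fun y => ∑ j, f j y) = fun y => ∑ j, pd i (f j) y := by
  ext x
  unfold pd
  rw [fderiv_fun_sum (fun j _ => ((hf j).differentiable (by simp)) x)]
  simp

lemma lapX_formula {n : ℕ} {F : Fin n → En n → ℝ} {G : En n → ℝ}
    (hF : ∀ j, ContDiff ℝ (⊤ : ℕ∞) (F j)) (hG : ContDiff ℝ (⊤ : ℕ∞) G) (x : En n) :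
    lapX (fun y => (∑ j, F j y ^ 2) + G y ^ 2) x =
      ∑ i, ((∑ j, (2 * (pd i (F j) x * pd i (F j) x) + 2 * (F j x * pd i (pd i (F j)) x)))
        + (2 * (pd i G x * pd i G x) + 2 * (G x * pd i (pd i G) x))) := by
  unfold lapX
  refine Finset.sum_congr rfl fun i _ => ?_
  have hF2 : ∀ j, ContDiff ℝ (⊤ : ℕ∞) (fun y => F j y ^ 2) := fun j => (hF j).pow 2
  have hG2 : ContDiff ℝ (⊤ : ℕ∞) (fun y => G y ^ 2) := hG.pow 2
  rw [pd_add i (ContDiff.sum fun j _ => hF2 j) hG2, pd_sum i hF2,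
    pd_add i (ContDiff.sum fun j _ => pd_smooth i (hF2 j)) (pd_smooth i hG2),
    pd_sum i (fun j => pd_smooth i (hF2 j))]
  simp only [pd_pd_sq i hG]
  congr 1
  exact Finset.sum_congr rfl fun j _ => pd_pd_sq i (hF j) x

/-- The scaled majorant kernel with growth `θ`. -/
def maj (n : ℕ) (s θ z : ℝ) (y : En n) : ℝ :=
  z ^ (2 * s) * (‖y‖ ^ 2 + z ^ 2) ^ (-((n : ℝ) + 2 * s) / 2) * ‖y‖ ^ θ

/-- The `z`-derivative of the Poisson kernel. -/
def kQ (n : ℕ) (s z : ℝ) (y : En n) : ℝ :=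
  pns n s * (2 * s * z ^ (2 * s - 1)) * (‖y‖ ^ 2 + z ^ 2) ^ (-((n : ℝ) + 2 * s) / 2)
    + pns n s * z ^ (2 * s) *
      (2 * z * (-((n : ℝ) + 2 * s) / 2) * (‖y‖ ^ 2 + z ^ 2) ^ (-((n : ℝ) + 2 * s) / 2 - 1))

lemma Jpos {n : ℕ} {z : ℝ} (hz : 0 < z) (y : En n) : 0 < ‖y‖ ^ 2 + z ^ 2 := by positivity

lemma Jcont {n : ℕ} {z : ℝ} (hz : 0 < z) (a : ℝ) :
    Continuous (fun y : En n => (‖y‖ ^ 2 + z ^ 2) ^ a) := by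
  refine Continuous.rpow_const (by fun_prop) fun y => Or.inl (Jpos hz y).ne'

lemma Pker_cont {n : ℕ} {s z : ℝ} (hz : 0 < z) : Continuous (Pker n s z) := by
  unfold Pker
  exact continuous_const.mul (Jcont hz _)

lemma kQ_cont {n : ℕ} {s z : ℝ} (hz : 0 < z) : Continuous (kQ n s z) := by
  unfold kQ
  exact (continuous_const.mul (Jcont hz _)).add
    (continuous_const.mul (continuous_const.mul (Jcont hz _)))

lemma maj_cont {n : ℕ} {s θ z : ℝ} (hθ : 0 ≤ θ) (hz : 0 < z) : Continuous (maj n s θ z) := by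
  unfold maj
  exact (continuous_const.mul (Jcont hz _)).mul
    (continuous_norm.rpow_const fun y => Or.inr hθ)

lemma maj_nonneg {n : ℕ} {s θ z : ℝ} (hz : 0 < z) (y : En n) : 0 ≤ maj n s θ z y := by
  unfold maj; positivity

lemma Pker_hasDerivAt {n : ℕ} {s z : ℝ} (hz : 0 < z) (y : En n) :
    HasDerivAt (fun t => Pker n s t y) (kQ n s z y) z := by
  unfold Pker kQ
  have h1 : HasDerivAt (fun t : ℝ => pns n s * t ^ (2 * s)) (pns n s * (2 * s * z ^ (2 * s - 1))) z :=
    (Real.hasDerivAt_rpow_const (Or.inl hz.ne')).const_mul _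
  have h2 : HasDerivAt (fun t : ℝ => ‖y‖ ^ 2 + t ^ 2) (2 * z) z := by
    simpa using (hasDerivAt_pow 2 z).const_add (‖y‖ ^ 2)
  exact h1.mul (h2.rpow_const (Or.inl (Jpos hz y).ne'))

lemma Pker_abs_le {n : ℕ} {s z : ℝ} (hz : 0 < z) (y : En n) :
    |Pker n s z y| ≤ |pns n s| * maj n s 0 z y := by
  unfold Pker maj
  rw [abs_mul, abs_mul, abs_of_nonneg (Real.rpow_nonneg hz.le _),
    abs_of_nonneg (Real.rpow_nonneg (Jpos hz y).le _)]
  simp [mul_assoc]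

lemma kQ_abs_le {n : ℕ} {s z : ℝ} (hs : 0 < s) (hz : 0 < z) (y : En n) :
    |kQ n s z y| ≤ (|pns n s| * (n + 4 * s)) * z⁻¹ * maj n s 0 z y := by
  unfold kQ maj
  have hJ := Jpos hz y
  set J := ‖y‖ ^ 2 + z ^ 2 with hJd
  have e1 : z ^ (2 * s - 1) = z ^ (2 * s) * z⁻¹ := by
    rw [Real.rpow_sub hz, Real.rpow_one]; rfl
  have e2 : J ^ (-((n : ℝ) + 2 * s) / 2 - 1) = J ^ (-((n : ℝ) + 2 * s) / 2) * J⁻¹ := by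
    rw [Real.rpow_sub hJ, Real.rpow_one]; rfl
  rw [e1, e2, Real.rpow_zero, mul_one]
  set A := z ^ (2 * s)
  set B := J ^ (-((n : ℝ) + 2 * s) / 2)
  have hA : 0 < A := Real.rpow_pos_of_pos hz _
  have hB : 0 < B := Real.rpow_pos_of_pos hJ _
  have e3 : pns n s * (2 * s * (A * z⁻¹)) * B
      + pns n s * A * (2 * z * (-((n : ℝ) + 2 * s) / 2) * (B * J⁻¹))
      = pns n s * z⁻¹ * A * B * (2 * s - (n + 2 * s) * (z ^ 2 * J⁻¹)) := by
    field_simp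
    ring
  have h1 : z ^ 2 * J⁻¹ ≤ 1 := by
    rw [← div_eq_mul_inv, div_le_one hJ, hJd]; nlinarith [sq_nonneg ‖y‖]
  have h0 : 0 ≤ z ^ 2 * J⁻¹ := by positivity
  have hn : (0:ℝ) ≤ n := by positivity
  have h4 : |2 * s - (n + 2 * s) * (z ^ 2 * J⁻¹)| ≤ n + 4 * s := by
    rw [abs_le]
    constructor <;> nlinarith
  rw [e3, abs_mul, abs_mul, abs_mul, abs_mul, abs_of_pos hA, abs_of_pos hB, abs_of_pos (inv_pos.2 hz)]
  calc _ ≤ |pns n s| * z⁻¹ * A * B * (n + 4 * s) := by gcongr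
    _ = _ := by ring

lemma maj_scale {n : ℕ} {s θ z : ℝ} (hz : 0 < z) (y : En n) :
    maj n s θ z y = z ^ (θ - n) * maj n s θ 1 (z⁻¹ • y) := by
  unfold maj
  have h1 : ‖y‖ ^ 2 + z ^ 2 = z ^ 2 * (‖z⁻¹ • y‖ ^ 2 + 1 ^ 2) := by
    rw [norm_smul, Real.norm_of_nonneg (inv_pos.2 hz).le]; field_simp
  have h2 : ‖y‖ = z * ‖z⁻¹ • y‖ := by
    rw [norm_smul, Real.norm_of_nonneg (inv_pos.2 hz).le]; field_simp
  have h3 : ‖y‖ ^ θ = z ^ θ * ‖z⁻¹ • y‖ ^ θ := by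
    conv_lhs => rw [h2]
    rw [Real.mul_rpow hz.le (norm_nonneg _)]
  rw [h3, h1, Real.mul_rpow (by positivity) (by positivity), ← Real.rpow_natCast z 2,
    ← Real.rpow_mul hz.le]
  have h4 : z ^ (θ - n) = z ^ (2 * s) * z ^ (((2:ℕ):ℝ) * (-((n : ℝ) + 2 * s) / 2)) * z ^ θ := by
    rw [← Real.rpow_add hz, ← Real.rpow_add hz]
    congr 1; push_cast; ring
  rw [h4, Real.one_rpow]
  ring

lemma maj_one_integrable {n : ℕ} {s θ : ℝ} (hθ : 0 ≤ θ) (hθs : θ < 2 * s) :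
    Integrable (maj n s θ 1) := by
  have h : Integrable (fun x : En n => (1 + ‖x‖ ^ 2) ^ (-((n : ℝ) + 2 * s - θ) / 2)) :=
    integrable_rpow_neg_one_add_norm_sq (by simp; linarith)
  refine h.mono' (maj_cont hθ one_pos).aestronglyMeasurable (Eventually.of_forall fun y => ?_)
  rw [Real.norm_of_nonneg (maj_nonneg one_pos y)]
  unfold maj
  have hJ : 0 < 1 + ‖y‖ ^ 2 := by positivity
  have e : (1 + ‖y‖ ^ 2) ^ (-((n : ℝ) + 2 * s - θ) / 2)
      = (1 + ‖y‖ ^ 2) ^ (-((n : ℝ) + 2 * s) / 2) * (1 + ‖y‖ ^ 2) ^ (θ / 2) := by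
    rw [← Real.rpow_add hJ]; congr 1; ring
  have h3 : ‖y‖ ^ θ ≤ (1 + ‖y‖ ^ 2) ^ (θ / 2) := by
    have : ‖y‖ ^ θ = (‖y‖ ^ 2) ^ (θ / 2) := by
      rw [← Real.rpow_natCast, ← Real.rpow_mul (norm_nonneg _)]; congr 1; push_cast; ring
    rw [this]
    gcongr
    linarith
  rw [e, Real.one_rpow, one_mul, one_pow, add_comm]
  gcongr

lemma maj_integrable {n : ℕ} {s θ z : ℝ} (hθ : 0 ≤ θ) (hθs : θ < 2 * s) (hz : 0 < z) :
    Integrable (maj n s θ z) := by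
  have h := ((maj_one_integrable (n := n) hθ hθs).comp_smul (inv_ne_zero hz.ne')).const_mul
    (z ^ (θ - n))
  exact h.congr (Eventually.of_forall fun y => (maj_scale hz y).symm)

lemma maj_integral {n : ℕ} {s θ z : ℝ} (hz : 0 < z) :
    ∫ y, maj n s θ z y = z ^ θ * ∫ y, maj n s θ 1 y := by
  simp_rw [maj_scale hz]
  rw [integral_const_mul, Measure.integral_comp_inv_smul, finrank_euclideanSpace, Fintype.card_fin,
    abs_of_pos (by positivity), smul_eq_mul, ← mul_assoc, ← Real.rpow_natCast, ← Real.rpow_add hz]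
  simp

lemma Pker_eq_maj {n : ℕ} {s z : ℝ} (y : En n) : Pker n s z y = pns n s * maj n s 0 z y := by
  unfold Pker maj; simp [mul_assoc]

lemma Pker_integral {n : ℕ} {s z : ℝ} (hz : 0 < z) :
    ∫ y, Pker n s z y = pns n s * ∫ y, maj n s 0 1 y := by
  simp_rw [Pker_eq_maj]
  rw [integral_const_mul, maj_integral hz]; simp

lemma kQ_integrable {n : ℕ} {s z : ℝ} (hs : 0 < s) (hz : 0 < z) : Integrable (kQ n s z) := by
  refine ((maj_integrable (n := n) (s := s) le_rfl (by linarith) hz).const_mul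
    ((|pns n s| * (n + 4 * s)) * z⁻¹)).mono' (kQ_cont hz).aestronglyMeasurable
    (Eventually.of_forall fun y => ?_)
  exact kQ_abs_le hs hz y

lemma Pker_integrable {n : ℕ} {s z : ℝ} (hs : 0 < s) (hz : 0 < z) : Integrable (Pker n s z) := by
  refine ((maj_integrable (n := n) (s := s) le_rfl (by linarith) hz).const_mul
    (|pns n s|)).mono' (Pker_cont hz).aestronglyMeasurable
    (Eventually.of_forall fun y => ?_)
  exact Pker_abs_le hz y

/-- Local comparison of the majorants. -/
lemma maj_loc {n : ℕ} {s z z0 : ℝ} (hs : 0 < s) (hz0 : 0 < z0) (h1 : z0 / 2 < z)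
    (h2 : z < 2 * z0) (y : En n) :
    z⁻¹ * maj n s 0 z y ≤ (2 * z0⁻¹) * (4 ^ (2 * s)) * maj n s 0 (z0 / 2) y := by
  have hz : 0 < z := by linarith
  have hz2 : 0 < z0 / 2 := by linarith
  unfold maj
  have e1 : z⁻¹ ≤ 2 * z0⁻¹ := by
    rw [show 2 * z0⁻¹ = (z0 / 2)⁻¹ by rw [inv_div]; ring]
    exact inv_anti₀ hz2 h1.le
  have e2 : z ^ (2 * s) ≤ 4 ^ (2 * s) * (z0 / 2) ^ (2 * s) := by
    rw [← Real.mul_rpow (by norm_num) hz2.le]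
    exact Real.rpow_le_rpow hz.le (by linarith) (by linarith)
  have e3 : (‖y‖ ^ 2 + z ^ 2) ^ (-((n : ℝ) + 2 * s) / 2)
      ≤ (‖y‖ ^ 2 + (z0 / 2) ^ 2) ^ (-((n : ℝ) + 2 * s) / 2) := by
    refine Real.rpow_le_rpow_of_nonpos (Jpos hz2 y) (by gcongr) ?_
    have : (0:ℝ) ≤ n := by positivity
    linarith
  rw [Real.rpow_zero, mul_one, mul_one]
  calc _ ≤ (2 * z0⁻¹) * ((4 ^ (2 * s) * (z0 / 2) ^ (2 * s)) *
      (‖y‖ ^ 2 + (z0 / 2) ^ 2) ^ (-((n : ℝ) + 2 * s) / 2)) := by gcongr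
    _ = _ := by ring

lemma cv_hasDerivAt {n : ℕ} {s z0 : ℝ} (hs : 0 < s) (hz0 : 0 < z0) {f : En n → ℝ}
    (hf : Continuous f) {M : ℝ} (hM : ∀ x, |f x| ≤ M) (x : En n) :
    HasDerivAt (fun z => cv (Pker n s z) f x) (cv (kQ n s z0) f x) z0 := by
  unfold cv
  have hM0 : 0 ≤ M := (abs_nonneg _).trans (hM 0)
  refine (hasDerivAt_integral_of_dominated_loc_of_deriv_le (s := Ioo (z0 / 2) (2 * z0))
    (F := fun z y => Pker n s z (x - y) * f y) (F' := fun z y => kQ n s z (x - y) * f y)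
    (bound := fun y => ((|pns n s| * (n + 4 * s)) * ((2 * z0⁻¹) * (4 ^ (2 * s)))) *
       maj n s 0 (z0 / 2) (x - y) * M)
    (Ioo_mem_nhds (by linarith) (by linarith)) ?_ ?_ ?_ ?_ ?_ ?_).2
  · filter_upwards [Ioi_mem_nhds hz0] with z hz
    exact (((Pker_cont hz).comp (continuous_const.sub continuous_id)).mul hf).aestronglyMeasurable
  · exact ((Pker_integrable hs hz0).comp_sub_left x).mul_bdd hf.aestronglyMeasurable
      (Eventually.of_forall hM)
  · exact (((kQ_cont hz0).comp (continuous_const.sub continuous_id)).mul hf).aestronglyMeasurable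
  · refine Eventually.of_forall fun y z hz => ?_
    have hz' : 0 < z := by linarith [hz.1]
    rw [norm_mul]
    refine mul_le_mul ?_ (hM y) (norm_nonneg _) ?_
    · refine (kQ_abs_le hs hz' _).trans ?_
      rw [mul_assoc, mul_assoc (|pns n s| * (n + 4 * s))]
      exact mul_le_mul_of_nonneg_left (maj_loc hs hz0 hz.1 hz.2 _) (by positivity)
    · have := maj_nonneg (n := n) (s := s) (θ := 0) (half_pos hz0) (x - y)
      positivity
  · exact (((maj_integrable (n := n) (s := s) le_rfl (by linarith)
      (half_pos hz0)).comp_sub_left x).const_mul _).mul_const _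
  · refine Eventually.of_forall fun y z hz => ?_
    exact (Pker_hasDerivAt (by linarith [hz.1]) _).mul_const _

lemma kQ_integral_zero {n : ℕ} {s z : ℝ} (hs : 0 < s) (hz : 0 < z) : ∫ y, kQ n s z y = 0 := by
  have h := cv_hasDerivAt (n := n) hs hz (f := fun _ => (1:ℝ)) continuous_const (M := 1)
    (fun x => by simp) 0
  have e1 : ∀ k : En n → ℝ, cv k (fun _ => (1:ℝ)) 0 = ∫ y, k y := by
    intro k
    unfold cv
    simp only [mul_one]
    exact integral_sub_left_eq_self k volume 0
  simp only [e1] at h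
  have h2 : HasDerivAt (fun z => ∫ y, Pker n s z y) 0 z := by
    refine (hasDerivAt_const z (pns n s * ∫ y, maj n s 0 1 y)).congr_of_eventuallyEq ?_
    filter_upwards [Ioi_mem_nhds hz] with t ht
    exact Pker_integral ht
  exact h.unique h2

lemma gen_bd {n : ℕ} {m : En n → ℝ≥0∞} (hm : Measurable m) {K : Set (En n)}
    (hK : MeasurableSet K) {H : En n → ℝ}
    (hH : ∀ x, ‖H x‖ₑ ≤ ∫⁻ y, m y * (K.indicator 1 (x - y) + K.indicator 1 x)) :
    (∀ x, ‖H x‖ₑ ≤ 2 * ∫⁻ y, m y) ∧ ∫⁻ x, ‖H x‖ₑ ≤ (2 * volume K) * ∫⁻ y, m y := by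
  have hI : Measurable (K.indicator (1 : En n → ℝ≥0∞)) := measurable_one.indicator hK
  constructor
  · intro x
    refine (hH x).trans ?_
    rw [← lintegral_const_mul _ hm]
    refine lintegral_mono fun y => ?_
    dsimp only
    rw [mul_comm]
    gcongr
    have h1 : ∀ w, K.indicator (1 : En n → ℝ≥0∞) w ≤ 1 := fun w =>
      indicator_le_self' (fun _ _ => zero_le) w
    calc _ ≤ (1 : ℝ≥0∞) + 1 := add_le_add (h1 _) (h1 _)
      _ = 2 := by norm_num
  · refine (lintegral_mono hH).trans ?_
    rw [lintegral_lintegral_swap]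
    · rw [← lintegral_const_mul _ hm]
      refine lintegral_mono fun y => ?_
      rw [lintegral_const_mul _ (by fun_prop), lintegral_add_left (by fun_prop),
        lintegral_sub_right_eq_self (K.indicator (1 : En n → ℝ≥0∞)) y, lintegral_indicator_one hK]
      rw [mul_comm, ← two_mul]
    · refine Measurable.aemeasurable ?_
      change Measurable fun p : En n × En n =>
        m p.2 * (K.indicator 1 (p.1 - p.2) + K.indicator 1 p.1)
      fun_prop

lemma lint_maj {n : ℕ} {s θ z c : ℝ} (hc : 0 ≤ c) (hθ : 0 ≤ θ) (hθs : θ < 2 * s) (hz : 0 < z) :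
    ∫⁻ y, ENNReal.ofReal (c * maj n s θ z y)
      = ENNReal.ofReal (c * (z ^ θ * ∫ y, maj n s θ 1 y)) := by
  rw [← maj_integral hz, ← integral_const_mul, ofReal_integral_eq_lintegral_ofReal
    ((maj_integrable hθ hθs hz).const_mul c)
    (Eventually.of_forall fun y => mul_nonneg hc (maj_nonneg hz y))]

lemma cv_swap {n : ℕ} (k f : En n → ℝ) (x : En n) : cv k f x = ∫ y, k y * f (x - y) := by
  unfold cv
  rw [← integral_sub_left_eq_self _ volume x]
  simp

lemma f_bdd {n : ℕ} {f : En n → ℝ} (hf : ContDiff ℝ (⊤ : ℕ∞) f) (hc : HasCompactSupport f) :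
    ∃ M : ℝ, 0 ≤ M ∧ ∀ x, |f x| ≤ M := by
  obtain ⟨M, hM⟩ := hc.exists_bound_of_continuous hf.continuous
  exact ⟨M, (norm_nonneg _).trans (hM 0), hM⟩

lemma f_ind {n : ℕ} {f : En n → ℝ} {M : ℝ} (hM : ∀ x, |f x| ≤ M) (x : En n) :
    ‖f x‖ₑ ≤ ENNReal.ofReal M * (tsupport f).indicator 1 x := by
  by_cases hx : x ∈ tsupport f
  · rw [indicator_of_mem hx, Pi.one_apply, mul_one, Real.enorm_eq_ofReal_abs]
    exact ENNReal.ofReal_le_ofReal (hM x)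
  · rw [image_eq_zero_of_notMem_tsupport hx]; simp

lemma P_bd {n : ℕ} {s : ℝ} (hs : 0 < s) {f : En n → ℝ} (hf : ContDiff ℝ (⊤ : ℕ∞) f)
    (hc : HasCompactSupport f) : ∃ C : ℝ, 0 ≤ C ∧ ∀ z : ℝ, 0 < z →
      (∀ x, ‖cv (Pker n s z) f x‖ₑ ≤ ENNReal.ofReal C) ∧
      ∫⁻ x, ‖cv (Pker n s z) f x‖ₑ ≤ ENNReal.ofReal C := by
  obtain ⟨M, hM0, hM⟩ := f_bdd hf hc
  have hK : volume (tsupport f) < ⊤ := hc.isCompact.measure_lt_top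
  set I := ∫ y, maj n s 0 1 y with hI
  have hI0 : 0 ≤ I := integral_nonneg fun y => maj_nonneg one_pos y
  set v := (volume (tsupport f)).toReal with hv
  have hv0 : 0 ≤ v := ENNReal.toReal_nonneg
  have hvK : volume (tsupport f) = ENNReal.ofReal v := (ENNReal.ofReal_toReal hK.ne).symm
  set c := |pns n s| * M with hcd
  have hc0 : 0 ≤ c := by positivity
  refine ⟨(2 + 2 * v) * (c * I), by positivity, fun z hz => ?_⟩
  have key := gen_bd (n := n) (m := fun y => ENNReal.ofReal (c * maj n s 0 z y))
    (K := tsupport f) (H := cv (Pker n s z) f)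
    (by have := maj_cont (n := n) (s := s) le_rfl hz; fun_prop)
    (isClosed_tsupport f).measurableSet ?_
  · rw [lint_maj hc0 le_rfl (by linarith) hz, Real.rpow_zero, one_mul, ← hI] at key
    refine ⟨fun x => (key.1 x).trans ?_, key.2.trans ?_⟩
    · rw [show (2 : ℝ≥0∞) = ENNReal.ofReal 2 by simp, ← ENNReal.ofReal_mul (by norm_num)]
      refine ENNReal.ofReal_le_ofReal ?_
      gcongr; linarith
    · rw [hvK, show (2 : ℝ≥0∞) = ENNReal.ofReal 2 by simp, ← ENNReal.ofReal_mul (by norm_num),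
        ← ENNReal.ofReal_mul (by positivity)]
      refine ENNReal.ofReal_le_ofReal ?_
      gcongr; linarith
  · intro x
    rw [cv_swap]
    refine (enorm_integral_le_lintegral_enorm _).trans (lintegral_mono fun y => ?_)
    dsimp only
    rw [enorm_mul]
    calc _ ≤ ENNReal.ofReal (|pns n s| * maj n s 0 z y) *
          (ENNReal.ofReal M * (tsupport f).indicator 1 (x - y)) := by
          refine mul_le_mul' ?_ (f_ind hM _)
          rw [Real.enorm_eq_ofReal_abs]
          exact ENNReal.ofReal_le_ofReal (Pker_abs_le hz y)
      _ = ENNReal.ofReal (c * maj n s 0 z y) * (tsupport f).indicator 1 (x - y) := by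
          rw [← mul_assoc, ← ENNReal.ofReal_mul
            (mul_nonneg (abs_nonneg _) (maj_nonneg hz y)), hcd]
          congr 2; ring
      _ ≤ _ := by gcongr; exact le_self_add

lemma f_hold {n : ℕ} {f : En n → ℝ} (hf : ContDiff ℝ (⊤ : ℕ∞) f) (hc : HasCompactSupport f)
    {θ : ℝ} (hθ : 0 ≤ θ) (hθ1 : θ ≤ 1) :
    ∃ C : ℝ, 0 ≤ C ∧ ∀ x y, ‖f (x - y) - f x‖ₑ ≤ ENNReal.ofReal (C * ‖y‖ ^ θ) *
      ((tsupport f).indicator 1 (x - y) + (tsupport f).indicator 1 x) := by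
  obtain ⟨M, hM0, hM⟩ := f_bdd hf hc
  obtain ⟨L, hL⟩ := hf.lipschitzWith_of_hasCompactSupport hc (by simp)
  refine ⟨2 * M + L, by positivity, fun x y => ?_⟩
  have h1 : |f (x - y) - f x| ≤ (2 * M + L) * ‖y‖ ^ θ := by
    rcases le_total ‖y‖ 1 with hy | hy
    · have h := hL.dist_le_mul (x - y) x
      rw [Real.dist_eq, dist_eq_norm, sub_sub_cancel_left, norm_neg] at h
      have h2 : ‖y‖ ≤ ‖y‖ ^ θ := by
        rcases (norm_nonneg y).eq_or_lt with h0 | h0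
        · rw [← h0]; positivity
        · conv_lhs => rw [← Real.rpow_one ‖y‖]
          exact Real.rpow_le_rpow_of_exponent_ge h0 hy hθ1
      calc _ ≤ L * ‖y‖ := h
        _ ≤ (2 * M + L) * ‖y‖ ^ θ := by gcongr; linarith
    · have h2 : 1 ≤ ‖y‖ ^ θ := Real.one_le_rpow hy hθ
      have h3 : |f (x - y) - f x| ≤ 2 * M := by
        have := abs_sub (f (x - y)) (f x)
        linarith [hM (x - y), hM x]
      have : (0:ℝ) ≤ L := L.2
      nlinarith
  by_cases hx : x ∈ tsupport f
  · rw [indicator_of_mem hx, Pi.one_apply, Real.enorm_eq_ofReal_abs]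
    calc _ ≤ ENNReal.ofReal ((2 * M + L) * ‖y‖ ^ θ) * 1 := by
          rw [mul_one]; exact ENNReal.ofReal_le_ofReal h1
      _ ≤ _ := by gcongr; exact le_add_self
  · by_cases hxy : x - y ∈ tsupport f
    · rw [indicator_of_mem hxy, Pi.one_apply, Real.enorm_eq_ofReal_abs]
      calc _ ≤ ENNReal.ofReal ((2 * M + L) * ‖y‖ ^ θ) * 1 := by
            rw [mul_one]; exact ENNReal.ofReal_le_ofReal h1
        _ ≤ _ := by gcongr; exact le_self_add
    · rw [image_eq_zero_of_notMem_tsupport hx, image_eq_zero_of_notMem_tsupport hxy]; simp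

lemma maj_mul {n : ℕ} {s θ z : ℝ} (y : En n) : maj n s 0 z y * ‖y‖ ^ θ = maj n s θ z y := by
  unfold maj; simp

lemma Q_bd {n : ℕ} {s θ : ℝ} (hs : 0 < s) (hθ : 0 ≤ θ) (hθ1 : θ ≤ 1) (hθs : θ < 2 * s)
    {f : En n → ℝ} (hf : ContDiff ℝ (⊤ : ℕ∞) f)
    (hc : HasCompactSupport f) : ∃ C : ℝ, 0 ≤ C ∧ ∀ z : ℝ, 0 < z →
      (∀ x, ‖cv (kQ n s z) f x‖ₑ ≤ ENNReal.ofReal (C * z ^ (θ - 1))) ∧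
      ∫⁻ x, ‖cv (kQ n s z) f x‖ₑ ≤ ENNReal.ofReal (C * z ^ (θ - 1)) := by
  obtain ⟨M, hM0, hM⟩ := f_bdd hf hc
  obtain ⟨C₁, hC₁, hh⟩ := f_hold hf hc hθ hθ1
  have hK : volume (tsupport f) < ⊤ := hc.isCompact.measure_lt_top
  set I := ∫ y, maj n s θ 1 y with hI
  have hI0 : 0 ≤ I := integral_nonneg fun y => maj_nonneg one_pos y
  set v := (volume (tsupport f)).toReal with hv
  have hv0 : 0 ≤ v := ENNReal.toReal_nonneg
  have hvK : volume (tsupport f) = ENNReal.ofReal v := (ENNReal.ofReal_toReal hK.ne).symm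
  set c := |pns n s| * (n + 4 * s) * C₁ with hcd
  have hc0 : 0 ≤ c := by positivity
  refine ⟨(2 + 2 * v) * (c * I), by positivity, fun z hz => ?_⟩
  have key := gen_bd (n := n) (m := fun y => ENNReal.ofReal ((c * z⁻¹) * maj n s θ z y))
    (K := tsupport f) (H := cv (kQ n s z) f)
    (by have := maj_cont (n := n) (s := s) hθ hz; fun_prop)
    (isClosed_tsupport f).measurableSet ?_
  · have e : c * z⁻¹ * (z ^ θ * I) = (c * I) * z ^ (θ - 1) := by
      rw [Real.rpow_sub hz, Real.rpow_one]; ring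
    rw [lint_maj (by positivity) hθ hθs hz, ← hI, e] at key
    refine ⟨fun x => (key.1 x).trans ?_, key.2.trans ?_⟩
    · rw [show (2 : ℝ≥0∞) = ENNReal.ofReal 2 by simp, ← ENNReal.ofReal_mul (by norm_num)]
      refine ENNReal.ofReal_le_ofReal ?_
      rw [← mul_assoc]
      gcongr; linarith
    · rw [hvK, show (2 : ℝ≥0∞) = ENNReal.ofReal 2 by simp, ← ENNReal.ofReal_mul (by norm_num),
        ← ENNReal.ofReal_mul (by positivity)]
      refine ENNReal.ofReal_le_ofReal ?_
      rw [← mul_assoc]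
      gcongr; linarith
  · intro x
    have e : cv (kQ n s z) f x = ∫ y, kQ n s z y * (f (x - y) - f x) := by
      have i1 : Integrable fun y => kQ n s z y * f (x - y) :=
        (kQ_integrable hs hz).mul_bdd
          (hf.continuous.comp (continuous_const.sub continuous_id)).aestronglyMeasurable
          (Eventually.of_forall fun y => hM (x - y))
      simp_rw [mul_sub]
      rw [cv_swap, integral_sub i1 ((kQ_integrable hs hz).mul_const _), integral_mul_const,
        kQ_integral_zero hs hz]
      simp
    rw [e]
    refine (enorm_integral_le_lintegral_enorm _).trans (lintegral_mono fun y => ?_)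
    dsimp only
    rw [enorm_mul]
    have hm0 := maj_nonneg (n := n) (s := s) (θ := 0) hz y
    calc _ ≤ ENNReal.ofReal ((|pns n s| * (n + 4 * s)) * z⁻¹ * maj n s 0 z y) *
          (ENNReal.ofReal (C₁ * ‖y‖ ^ θ) * ((tsupport f).indicator 1 (x - y) +
            (tsupport f).indicator 1 x)) := by
          refine mul_le_mul' ?_ (hh x y)
          rw [Real.enorm_eq_ofReal_abs]
          exact ENNReal.ofReal_le_ofReal (kQ_abs_le hs hz y)
      _ = _ := by
          rw [← mul_assoc, ← ENNReal.ofReal_mul (by positivity), ← maj_mul (θ := θ), hcd]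
          congr 2; ring

lemma Pker_lip {n : ℕ} {s z : ℝ} (hs : 0 < s) (hz : 1 ≤ z) (a b : En n) (hn : 1 ≤ n) :
    |Pker n s z a - Pker n s z b| ≤ |pns n s| * (n + 2 * s) * z ^ (-2 : ℝ) * ‖a - b‖ := by
  have hz0 : 0 < z := by linarith
  set e : ℝ := -((n : ℝ) + 2 * s) / 2 with he
  have hn' : (1:ℝ) ≤ n := by exact_mod_cast hn
  have hd : ∀ r : ℝ, HasDerivAt (fun r : ℝ => (r ^ 2 + z ^ 2) ^ e)
      (2 * r * e * (r ^ 2 + z ^ 2) ^ (e - 1)) r := by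
    intro r
    have h2 : HasDerivAt (fun t : ℝ => t ^ 2 + z ^ 2) (2 * r) r := by
      simpa using (hasDerivAt_pow 2 r).add_const (z ^ 2)
    exact h2.rpow_const (Or.inl (by positivity))
  have hb : ∀ r : ℝ, ‖2 * r * e * (r ^ 2 + z ^ 2) ^ (e - 1)‖ ≤
      (n + 2 * s) * (z ^ (2 * e) * z⁻¹) := by
    intro r
    have hJ : 0 < r ^ 2 + z ^ 2 := by positivity
    have hee : |e| = ((n : ℝ) + 2 * s) / 2 := by
      rw [he, neg_div, abs_neg, abs_of_nonneg (by positivity)]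
    have hq : 0 < (r ^ 2 + z ^ 2) ^ e / (r ^ 2 + z ^ 2) := by positivity
    rw [Real.rpow_sub hJ, Real.rpow_one, Real.norm_eq_abs, abs_mul, abs_mul, abs_mul,
      abs_of_pos hq, abs_of_nonneg (zero_le_two (α := ℝ)), hee]
    have h1 : (r ^ 2 + z ^ 2) ^ e ≤ z ^ (2 * e) := by
      rw [Real.rpow_mul hz0.le]
      refine Real.rpow_le_rpow_of_nonpos (by positivity) ?_ ?_
      · rw [Real.rpow_two]; nlinarith [sq_nonneg r]
      · rw [he]; linarith
    have h2 : |r| / (r ^ 2 + z ^ 2) ≤ z⁻¹ := by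
      rw [← one_div, div_le_div_iff₀ hJ hz0, ← sq_abs r]
      nlinarith [sq_nonneg (|r| - z), abs_nonneg r]
    calc _ = (n + 2 * s) * ((r ^ 2 + z ^ 2) ^ e * (|r| / (r ^ 2 + z ^ 2))) := by ring
      _ ≤ _ := by gcongr
  have hmv := convex_univ.norm_image_sub_le_of_norm_hasDerivWithin_le
    (fun r _ => (hd r).hasDerivWithinAt) (fun r _ => hb r) (mem_univ ‖b‖) (mem_univ ‖a‖)
  have hab : ‖‖a‖ - ‖b‖‖ ≤ ‖a - b‖ := abs_norm_sub_norm_le a b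
  unfold Pker
  rw [← mul_sub, abs_mul, abs_mul, abs_of_pos (Real.rpow_pos_of_pos hz0 _)]
  rw [Real.norm_eq_abs] at hmv
  have hfin : z ^ (2 * s) * (z ^ (2 * e) * z⁻¹) ≤ z ^ (-2 : ℝ) := by
    rw [← Real.rpow_neg_one, ← Real.rpow_add hz0, ← Real.rpow_add hz0]
    refine Real.rpow_le_rpow_of_exponent_le hz ?_
    rw [he]; linarith
  calc _ ≤ |pns n s| * z ^ (2 * s) * ((n + 2 * s) * (z ^ (2 * e) * z⁻¹) * ‖a - b‖) := by
        gcongr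
        exact hmv.trans (by gcongr)
    _ = |pns n s| * (n + 2 * s) * (z ^ (2 * s) * (z ^ (2 * e) * z⁻¹)) * ‖a - b‖ := by ring
    _ ≤ _ := by gcongr

lemma P_bd' {n : ℕ} {s : ℝ} (hn : 1 ≤ n) (hs : 0 < s) {f : En n → ℝ}
    (hf : ContDiff ℝ (⊤ : ℕ∞) f) (hc : HasCompactSupport f) (j : Fin n) :
    ∃ C : ℝ, 0 ≤ C ∧ ∀ z : ℝ, 1 ≤ z →
      ∀ x, ‖cv (Pker n s z) (pd j f) x‖ₑ ≤ ENNReal.ofReal (C * z ^ (-2 : ℝ)) := by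
  obtain ⟨M, hM0, hM⟩ := f_bdd hf hc
  have hfi : Integrable f := hf.continuous.integrable_of_hasCompactSupport hc
  set I := ∫ y, |f y| with hI
  have hI0 : 0 ≤ I := integral_nonneg fun y => abs_nonneg _
  refine ⟨|pns n s| * (n + 2 * s) * I, by positivity, fun z hz x => ?_⟩
  have hz0 : 0 < z := by linarith
  rw [← pd_cv (Pker_cont hz0) hf hc, Real.enorm_eq_ofReal_abs]
  refine ENNReal.ofReal_le_ofReal ?_
  set c := |pns n s| * (n + 2 * s) * I * z ^ (-2 : ℝ) with hcd
  have hc0 : 0 ≤ c := by positivity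
  have hi : ∀ a : En n, Integrable fun y => Pker n s z (a - y) * f y := fun a =>
    ((Pker_integrable hs hz0).comp_sub_left a).mul_bdd hf.continuous.aestronglyMeasurable
      (Eventually.of_forall hM)
  have hlip : LipschitzWith c.toNNReal (cv (Pker n s z) f) := by
    refine LipschitzWith.of_dist_le_mul fun a b => ?_
    rw [Real.dist_eq, dist_eq_norm]
    unfold cv
    rw [← integral_sub (hi a) (hi b), ← Real.norm_eq_abs]
    refine (norm_integral_le_of_norm_le (hfi.abs.const_mul
      (|pns n s| * (n + 2 * s) * z ^ (-2 : ℝ) * ‖a - b‖)) (Eventually.of_forall fun y => ?_)).trans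
      (le_of_eq ?_)
    · rw [← sub_mul, norm_mul]
      have := Pker_lip hs hz (a - y) (b - y) hn
      rw [sub_sub_sub_cancel_right] at this
      exact mul_le_mul_of_nonneg_right this (abs_nonneg _)
    · rw [integral_const_mul, Real.coe_toNNReal _ hc0, hcd, ← hI]; ring
  have h1 := norm_fderiv_le_of_lipschitz ℝ hlip (x₀ := x)
  rw [Real.coe_toNNReal _ hc0] at h1
  unfold pd
  calc _ ≤ ‖fderiv ℝ (cv (Pker n s z) f) x‖ * ‖(EuclideanSpace.single j 1 : En n)‖ :=
        ContinuousLinearMap.le_opNorm _ _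
    _ ≤ c := by simpa using h1

lemma lint_prod_le {α β : Type*} [MeasurableSpace α] [MeasurableSpace β] (μ : Measure α)
    (ν : Measure β) [SFinite μ] [SFinite ν] (f : α × β → ℝ≥0∞) :
    ∫⁻ p, f p ∂(μ.prod ν) ≤ ∫⁻ y, ∫⁻ x, f (x, y) ∂μ ∂ν := by
  obtain ⟨g, hg, hgf, he⟩ := exists_measurable_le_lintegral_eq (μ.prod ν) f
  rw [he, lintegral_prod_symm _ hg.aemeasurable]
  exact lintegral_mono fun y => lintegral_mono fun x => hgf (x, y)

/-- Slice-wise continuous functions with finite weighted `L¹` norm. -/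
def Good {n : ℕ} (s : ℝ) (h : En n → ℝ → ℝ) : Prop :=
  (∀ z, 0 < z → Continuous fun x => h x z) ∧ ∃ Φ : ℝ → ℝ≥0∞, Measurable Φ ∧
    (∫⁻ z in Ioi (0 : ℝ), Φ z < ⊤) ∧
    ∀ z, 0 < z → ∫⁻ x, ENNReal.ofReal (z ^ (1 - 2 * s) * |h x z|) ≤ Φ z

lemma Good.add {n : ℕ} {s : ℝ} {h g : En n → ℝ → ℝ} (hh : Good s h) (hg : Good s g) :
    Good s (fun x z => h x z + g x z) := by
  obtain ⟨hc, Φ, hΦ, hf, hb⟩ := hh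
  obtain ⟨gc, Ψ, gΦ, gf, gb⟩ := hg
  refine ⟨fun z hz => (hc z hz).add (gc z hz), fun z => Φ z + Ψ z, hΦ.add gΦ, ?_, fun z hz => ?_⟩
  · rw [lintegral_add_left hΦ]
    exact ENNReal.add_lt_top.2 ⟨hf, gf⟩
  · refine le_trans ?_ (add_le_add (hb z hz) (gb z hz))
    have := hc z hz
    rw [← lintegral_add_left (by fun_prop)]
    refine lintegral_mono fun x => ?_
    dsimp only
    rw [← ENNReal.ofReal_add (by positivity) (by positivity), ← mul_add]
    refine ENNReal.ofReal_le_ofReal ?_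
    gcongr
    exact abs_add_le _ _

lemma Good.two_mul {n : ℕ} {s : ℝ} {h : En n → ℝ → ℝ} (hh : Good s h) :
    Good s (fun x z => 2 * h x z) := by
  have := hh.add hh
  simpa only [← _root_.two_mul] using this

lemma Good.zero {n : ℕ} {s : ℝ} : Good (n := n) s (fun _ _ => 0) :=
  ⟨fun _ _ => continuous_const, fun _ => 0, measurable_const, by simp, fun z hz => by simp⟩

lemma Good.sum {n : ℕ} {s : ℝ} {ι : Type*} (t : Finset ι) {h : ι → En n → ℝ → ℝ}
    (hh : ∀ i, Good s (h i)) : Good s (fun x z => ∑ i ∈ t, h i x z) := by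
  classical
  induction t using Finset.induction_on with
  | empty => simpa using Good.zero
  | insert a t ha ih =>
    simp only [Finset.sum_insert ha]
    exact (hh a).add ih

lemma good_of_bounds {n : ℕ} {s A B C : ℝ} (hA : -1 < A) (hB : B < -1)
    {h : En n → ℝ → ℝ} (hc : ∀ z, 0 < z → Continuous fun x => h x z)
    (h1 : ∀ z, 0 < z → z ≤ 1 →
      ∫⁻ x, ENNReal.ofReal (z ^ (1 - 2 * s) * |h x z|) ≤ ENNReal.ofReal (C * z ^ A))
    (h2 : ∀ z, 1 ≤ z →
      ∫⁻ x, ENNReal.ofReal (z ^ (1 - 2 * s) * |h x z|) ≤ ENNReal.ofReal (C * z ^ B)) :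
    Good s h := by
  refine ⟨hc, fun z => if z < 1 then ENNReal.ofReal (C * z ^ A) else ENNReal.ofReal (C * z ^ B),
    Measurable.ite measurableSet_Iio (by fun_prop) (by fun_prop), ?_, fun z hz => ?_⟩
  · have i1 : IntegrableOn (fun z : ℝ => C * z ^ A) (Ioo 0 1) :=
      ((intervalIntegral.integrableOn_Ioo_rpow_iff one_pos).2 hA).const_mul C
    have i2 : IntegrableOn (fun z : ℝ => C * z ^ B) (Ioi 1) :=
      (integrableOn_Ioi_rpow_of_lt hB one_pos).const_mul C
    rw [← Ioo_union_Ici_eq_Ioi (zero_lt_one (α := ℝ))]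
    refine (lintegral_union_le _ _ _).trans_lt (ENNReal.add_lt_top.2 ⟨?_, ?_⟩)
    · rw [setLIntegral_congr_fun (g := fun z => ENNReal.ofReal (C * z ^ A)) measurableSet_Ioo
        (fun z hz => if_pos hz.2)]
      exact i1.lintegral_lt_top
    · rw [setLIntegral_congr_fun (g := fun z => ENNReal.ofReal (C * z ^ B)) measurableSet_Ici
        (fun z hz => if_neg (not_lt.2 hz)), setLIntegral_congr Ioi_ae_eq_Ici.symm]
      exact i2.lintegral_lt_top
  · dsimp only
    split_ifs with hz1
    · exact h1 z hz hz1.le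
    · exact h2 z (not_lt.1 hz1)

lemma slice_mul {n : ℕ} {F G : En n → ℝ} {w a b : ℝ} (hG : Continuous G)
    (hw : 0 ≤ w) (ha : 0 ≤ a)
    (h1 : ∀ x, ‖F x‖ₑ ≤ ENNReal.ofReal a) (h2 : ∫⁻ x, ‖G x‖ₑ ≤ ENNReal.ofReal b) :
    ∫⁻ x, ENNReal.ofReal (w * |F x * G x|) ≤ ENNReal.ofReal (w * (a * b)) := by
  rw [ENNReal.ofReal_mul hw, ENNReal.ofReal_mul ha, ← mul_assoc]
  refine le_trans ?_ (mul_le_mul_right h2 _)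
  rw [← lintegral_const_mul _ (by fun_prop)]
  refine lintegral_mono fun x => ?_
  dsimp only
  rw [ENNReal.ofReal_mul hw, ← Real.enorm_eq_ofReal_abs, enorm_mul, mul_assoc]
  gcongr
  exact h1 x

lemma good_P {n : ℕ} {s : ℝ} (hn : 1 ≤ n) (hs0 : 0 < s) (hs1 : s < 1) {f g : En n → ℝ}
    (hf : ContDiff ℝ (⊤ : ℕ∞) f) (hfc : HasCompactSupport f)
    (hg : ContDiff ℝ (⊤ : ℕ∞) g) (hgc : HasCompactSupport g) (j : Fin n) :
    Good s (fun x z => cv (Pker n s z) (pd j f) x * cv (Pker n s z) g x) := by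
  obtain ⟨C₁, hC₁, b₁⟩ := P_bd hs0 (pd_smooth j hf) (pd_compact j hfc)
  obtain ⟨C₂, hC₂, b₂⟩ := P_bd hs0 hg hgc
  obtain ⟨C₃, hC₃, b₃⟩ := P_bd' hn hs0 hf hfc j
  have hcf : ∀ z, 0 < z → Continuous (cv (Pker n s z) (pd j f)) := fun z hz =>
    (cv_smooth (Pker_cont hz) (pd_smooth j hf) (pd_compact j hfc)).continuous
  have hcg : ∀ z, 0 < z → Continuous (cv (Pker n s z) g) := fun z hz =>
    (cv_smooth (Pker_cont hz) hg hgc).continuous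
  refine good_of_bounds (A := 1 - 2 * s) (B := -1 - 2 * s) (C := (C₁ + C₃) * C₂) (by linarith)
    (by linarith) (fun z hz => (hcf z hz).mul (hcg z hz)) ?_ ?_
  · intro z hz hz1
    refine (slice_mul (hcg z hz) (by positivity) hC₁ (b₁ z hz).1 (b₂ z hz).2).trans
      (ENNReal.ofReal_le_ofReal ?_)
    rw [mul_comm]
    gcongr
    linarith
  · intro z hz1
    have hz : 0 < z := by linarith
    refine (slice_mul (hcg z hz) (by positivity) (by positivity) (b₃ z hz1) (b₂ z hz).2).trans
      (ENNReal.ofReal_le_ofReal ?_)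
    have e : z ^ (-1 - 2 * s) = z ^ (1 - 2 * s) * z ^ (-2 : ℝ) := by
      rw [← Real.rpow_add hz]; congr 1; ring
    rw [e]
    calc _ = (C₃ * C₂) * (z ^ (1 - 2 * s) * z ^ (-2 : ℝ)) := by ring
      _ ≤ _ := by gcongr; linarith

lemma good_Q {n : ℕ} {s : ℝ} (hs0 : 0 < s) (hs1 : s < 1) {f g : En n → ℝ}
    (hf : ContDiff ℝ (⊤ : ℕ∞) f) (hfc : HasCompactSupport f)
    (hg : ContDiff ℝ (⊤ : ℕ∞) g) (hgc : HasCompactSupport g) :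
    Good s (fun x z => cv (kQ n s z) f x * cv (kQ n s z) g x) := by
  obtain ⟨θ, hθs, hθ⟩ : ∃ θ, s < θ ∧ θ < min 1 (2 * s) :=
    exists_between (lt_min hs1 (by linarith))
  have hθ1 : θ ≤ 1 := (hθ.trans_le (min_le_left _ _)).le
  have hθ2 : θ < 2 * s := hθ.trans_le (min_le_right _ _)
  have hθ0 : 0 ≤ θ := by linarith
  obtain ⟨C₁, hC₁, b₁⟩ := Q_bd hs0 hθ0 hθ1 hθ2 hf hfc
  obtain ⟨C₂, hC₂, b₂⟩ := Q_bd hs0 hθ0 hθ1 hθ2 hg hgc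
  obtain ⟨D₁, hD₁, d₁⟩ := Q_bd hs0 le_rfl zero_le_one (by linarith) hf hfc
  obtain ⟨D₂, hD₂, d₂⟩ := Q_bd hs0 le_rfl zero_le_one (by linarith) hg hgc
  have hcf : ∀ z, 0 < z → Continuous (cv (kQ n s z) f) := fun z hz =>
    (cv_smooth (kQ_cont hz) hf hfc).continuous
  have hcg : ∀ z, 0 < z → Continuous (cv (kQ n s z) g) := fun z hz =>
    (cv_smooth (kQ_cont hz) hg hgc).continuous
  refine good_of_bounds (A := 2 * θ - 2 * s - 1) (B := -1 - 2 * s) (C := C₁ * C₂ + D₁ * D₂)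
    (by linarith) (by linarith) (fun z hz => (hcf z hz).mul (hcg z hz)) ?_ ?_
  · intro z hz hz1
    refine (slice_mul (hcg z hz) (by positivity) (by positivity) (b₁ z hz).1 (b₂ z hz).2).trans
      (ENNReal.ofReal_le_ofReal ?_)
    have e : z ^ (2 * θ - 2 * s - 1) = z ^ (1 - 2 * s) * (z ^ (θ - 1) * z ^ (θ - 1)) := by
      rw [← Real.rpow_add hz, ← Real.rpow_add hz]; congr 1; ring
    rw [e]
    calc _ = (C₁ * C₂) * (z ^ (1 - 2 * s) * (z ^ (θ - 1) * z ^ (θ - 1))) := by ring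
      _ ≤ _ := by gcongr; nlinarith [mul_nonneg hD₁ hD₂]
  · intro z hz1
    have hz : 0 < z := by linarith
    refine (slice_mul (hcg z hz) (by positivity) (by positivity) (d₁ z hz).1 (d₂ z hz).2).trans
      (ENNReal.ofReal_le_ofReal ?_)
    have e : z ^ (-1 - 2 * s) = z ^ (1 - 2 * s) * (z ^ ((0:ℝ) - 1) * z ^ ((0:ℝ) - 1)) := by
      rw [← Real.rpow_add hz, ← Real.rpow_add hz]; congr 1; ring
    rw [e]
    calc _ = (D₁ * D₂) * (z ^ (1 - 2 * s) * (z ^ ((0:ℝ) - 1) * z ^ ((0:ℝ) - 1))) := by ring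
      _ ≤ _ := by gcongr; nlinarith [mul_nonneg hC₁ hC₂]

lemma lapX_eq {n : ℕ} {s z : ℝ} (hs0 : 0 < s) (hz : 0 < z) {u : En n → ℝ}
    (hu : ContDiff ℝ (⊤ : ℕ∞) u) (huc : HasCompactSupport u) (x : En n) :
    lapX (fun y => (∑ i, (pd i (fun y' => CSext n s u y' z) y) ^ 2)
                + (deriv (CSext n s u y) z) ^ 2) x =
      ∑ i, ((∑ j, (2 * (cv (Pker n s z) (pd i (pd j u)) x * cv (Pker n s z) (pd i (pd j u)) x)
          + 2 * (cv (Pker n s z) (pd j u) x * cv (Pker n s z) (pd i (pd i (pd j u))) x)))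
        + (2 * (cv (kQ n s z) (pd i u) x * cv (kQ n s z) (pd i u) x)
          + 2 * (cv (kQ n s z) u x * cv (kQ n s z) (pd i (pd i u)) x))) := by
  obtain ⟨M, hM0, hM⟩ := f_bdd hu huc
  have hP := Pker_cont (n := n) (s := s) hz
  have hQ := kQ_cont (n := n) (s := s) hz
  have e1 : ∀ y, deriv (CSext n s u y) z = cv (kQ n s z) u y := fun y =>
    (cv_hasDerivAt hs0 hz hu.continuous hM y).deriv
  have e2 : ∀ i, pd i (fun y' => CSext n s u y' z) = cv (Pker n s z) (pd i u) := fun i =>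
    pd_cv hP hu huc i
  simp only [e1, e2]
  rw [lapX_formula (fun j => cv_smooth hP (pd_smooth j hu) (pd_compact j huc))
    (cv_smooth hQ hu huc)]
  simp only [pd_cv hQ hu huc, pd_cv hQ (pd_smooth _ hu) (pd_compact _ huc),
    pd_cv hP (pd_smooth _ hu) (pd_compact _ huc),
    pd_cv hP (pd_smooth _ (pd_smooth _ hu)) (pd_compact _ (pd_compact _ huc))]

/-- **`L¹` bound for `Δ_x(|∇̃U|²)`** (Appendix Lemma, Euclidean case): if the weighted Hessian
energy is finite, then `∫₀^∞ ∫ z^{1-2s} |Δ_x(|∇̃U|²)| dx dz < ∞`. -/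
theorem laplacian_gradsq_L1 (n : ℕ) (hn : 1 ≤ n) (s : ℝ) (hs0 : 0 < s) (hs1 : s < 1)
    (u : En n → ℝ) (hu : ContDiff ℝ (⊤ : ℕ∞) u) (huc : HasCompactSupport u)
    (hhess : ∫⁻ p in (univ : Set (En n)) ×ˢ Ioi (0 : ℝ),
      ENNReal.ofReal
        (p.2 ^ (1 - 2 * s) *
          ∑ i, ∑ j, (pd i (pd j (fun y => CSext n s u y p.2)) p.1) ^ 2) < ⊤) :
    ∫⁻ p in (univ : Set (En n)) ×ˢ Ioi (0 : ℝ),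
      ENNReal.ofReal
        (p.2 ^ (1 - 2 * s) *
          |lapX (fun y =>
              (∑ i, (pd i (fun y' => CSext n s u y' p.2) y) ^ 2)
                + (deriv (CSext n s u y) p.2) ^ 2) p.1|) < ⊤ := by
  have hg : Good (n := n) s (fun x z =>
      ∑ i, ((∑ j, (2 * (cv (Pker n s z) (pd i (pd j u)) x * cv (Pker n s z) (pd i (pd j u)) x)
          + 2 * (cv (Pker n s z) (pd j u) x * cv (Pker n s z) (pd i (pd i (pd j u))) x)))
        + (2 * (cv (kQ n s z) (pd i u) x * cv (kQ n s z) (pd i u) x)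
          + 2 * (cv (kQ n s z) u x * cv (kQ n s z) (pd i (pd i u)) x)))) := by
    have s1 := fun i => pd_smooth (n := n) i hu
    have c1 := fun i => pd_compact (n := n) i huc
    have s2 := fun i j => pd_smooth (n := n) i (s1 j)
    have c2 := fun i j => pd_compact (n := n) i (c1 j)
    refine Good.sum _ fun i => Good.add (Good.sum _ fun j => Good.add (Good.two_mul ?_)
      (Good.two_mul ?_)) (Good.add (Good.two_mul ?_) (Good.two_mul ?_))
    · exact good_P hn hs0 hs1 (s1 j) (c1 j) (s2 i j) (c2 i j) i
    · exact good_P hn hs0 hs1 hu huc (pd_smooth i (s2 i j)) (pd_compact i (c2 i j)) j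
    · exact good_Q hs0 hs1 (s1 i) (c1 i) (s1 i) (c1 i)
    · exact good_Q hs0 hs1 hu huc (s2 i i) (c2 i i)
  obtain ⟨-, Φ, -, hfin, hb⟩ := hg
  rw [Measure.volume_eq_prod, ← Measure.prod_restrict, Measure.restrict_univ]
  refine (lint_prod_le _ _ _).trans_lt (lt_of_le_of_lt ?_ hfin)
  refine setLIntegral_mono' measurableSet_Ioi fun z hz => ?_
  refine le_trans (le_of_eq ?_) (hb z hz)
  refine lintegral_congr fun x => ?_
  dsimp only
  rw [lapX_eq hs0 hz hu huc]
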